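/- arXiv:0709.2555 — 2 statements merged into one kernel-verified Lean document; each statement's English description precedes it below -/
import Mathlib

section
/- Let 𝒫 be a configuration of n points in general position in the plane, and let P, Q, R be three pairwise distinct points of 𝒫. If n(P,Q) ≢ n(Q,R) (mod 2), then n(P,R) ≡ n (mod 2). -/
open scoped Classical

noncomputable section

/-- The set Pts is in general position: no three distinct points are collinear. -/
def GenPos (Pts : Finset (ℝ × ℝ)) : Prop :=
  ∀ A ∈ Pts, ∀ B ∈ Pts, ∀ C ∈ Pts, A ≠ B → A ≠ C → B ≠ C →
    ¬ Collinear ℝ ({A, B, C} : Set (ℝ × ℝ))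

/-- `sepCount Pts P Q` is the number of unordered pairs `{R, S}` of points of `Pts \ {P, Q}`
such that the line through `R` and `S` strictly separates `P` and `Q`. -/
def sepCount (Pts : Finset (ℝ × ℝ)) (P Q : ℝ × ℝ) : ℕ :=
  ((Finset.powersetCard 2 (Pts \ {P, Q})).filter
    (fun s => (affineSpan ℝ (↑s : Set (ℝ × ℝ))).SOppSide P Q)).card

/-- The vertices of the convex hull of `Pts` (its extreme points). -/
def hullVertices (Pts : Finset (ℝ × ℝ)) : Set (ℝ × ℝ) :=
  Set.extremePoints ℝ (convexHull ℝ (↑Pts : Set (ℝ × ℝ)))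

/-- `Q : ZMod k → ℝ × ℝ` lists the points of `S` in convex position, in cyclic order:
`Q` is an injective enumeration of `S` and, for every `i`, all points of `S` other than
`Q i` and `Q (i+1)` lie strictly on the same side of the line through `Q i` and `Q (i+1)`
(i.e. each consecutive pair spans an edge of the convex hull of `S`). -/
def IsConvexCycle (k : ℕ) (S : Set (ℝ × ℝ)) (Q : ZMod k → ℝ × ℝ) : Prop :=
  Function.Injective Q ∧ Set.range Q = S ∧
    ∀ i : ZMod k, ∀ x ∈ S, ∀ y ∈ S,
      x ∉ ({Q i, Q (i + 1)} : Set (ℝ × ℝ)) → y ∉ ({Q i, Q (i + 1)} : Set (ℝ × ℝ)) →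
        (affineSpan ℝ ({Q i, Q (i + 1)} : Set (ℝ × ℝ))).SSameSide x y

/-!
Attach to a line `ℓ` and two points off it the sign `-1` if `ℓ` separates them and `1` otherwise.
Then `(-1) ^ n(X,Y)` is the product of these signs over the lines through two points of
`𝒫 \ {X, Y}`. Compute the parity of `n(P,Q) + n(Q,R) + n(P,R)` by multiplying the three products.
A line through two points other than `P`, `Q`, `R` separates an even number of the pairs `PQ`,
`QR`, `PR` and contributes `1`. The remaining lines join a point `S` to one of `P`, `Q`, `R`. In the
product of the signs of `SP`, `SQ`, `SR` for the pairs of vertices they avoid, the orientations of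
the triangles `SPQ`, `SQR`, `SRP` occur once each way round, so each of the `n - 3` points `S`
contributes `-1`. Hence `n(P,Q) + n(Q,R) + n(P,R) ≡ n - 3 (mod 2)`, which leaves
`n(P,R) ≡ n (mod 2)` when the first two terms have an odd sum.
-/

section SideSign

variable {𝕜 V P : Type*} [Field 𝕜] [LinearOrder 𝕜] [IsStrictOrderedRing 𝕜] [AddCommGroup V]
  [Module 𝕜 V] [AddTorsor V P] {s : AffineSubspace 𝕜 P} {f : P →ᵃ[𝕜] 𝕜} {x y z : P}

lemma wOppSide_iff_mul_nonpos (hs : ∀ p, p ∈ s ↔ f p = 0) :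
    s.WOppSide x y ↔ f x * f y ≤ 0 :=
  calc s.WOppSide x y
    _ ↔ ∃ p ∈ s, Wbtw 𝕜 x p y := AffineSubspace.wOppSide_iff_exists_wbtw
    _ ↔ 0 ∈ f '' affineSegment 𝕜 x y := by
      simp only [Wbtw, Set.mem_image, hs, and_comm]
    _ ↔ 0 ∈ Set.uIcc (f x) (f y) := by
      rw [affineSegment_image, affineSegment_eq_segment, segment_eq_uIcc]
    _ ↔ f x * f y ≤ 0 := by
      rw [Set.mem_uIcc, mul_nonpos_iff]; tauto

lemma sOppSide_iff_mul_neg (hs : ∀ p, p ∈ s ↔ f p = 0) :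
    s.SOppSide x y ↔ f x * f y < 0 := by
  rw [AffineSubspace.SOppSide, wOppSide_iff_mul_nonpos hs, hs, hs, lt_iff_le_and_ne,
    mul_ne_zero_iff]

/-- The multiplicative indicator of separation: `-1` if `x` and `y` lie strictly on opposite sides
of `s`, and `1` otherwise (in particular when `x` or `y` lies on `s`). -/
def sideSign (s : AffineSubspace 𝕜 P) (x y : P) : SignType :=
  if s.SOppSide x y then -1 else 1

lemma sideSign_eq_sign_mul (hs : ∀ p, p ∈ s ↔ f p = 0) (hx : f x ≠ 0) (hy : f y ≠ 0) :
    sideSign s x y = SignType.sign (f x * f y) := by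
  rw [sideSign, sOppSide_iff_mul_neg hs]
  rcases (mul_ne_zero hx hy).lt_or_gt with hneg | hpos
  · rw [if_pos hneg, sign_neg hneg]
  · rw [if_neg hpos.not_gt, sign_pos hpos]

lemma sideSign_mul_sideSign_mul_sideSign (hs : ∀ p, p ∈ s ↔ f p = 0)
    (hx : f x ≠ 0) (hy : f y ≠ 0) (hz : f z ≠ 0) :
    sideSign s x y * sideSign s y z * sideSign s x z = 1 := by
  have hsq : f x * f y * (f y * f z) * (f x * f z) = (f x * f y * f z) ^ 2 := by ring
  rw [sideSign_eq_sign_mul hs hx hy, sideSign_eq_sign_mul hs hy hz, sideSign_eq_sign_mul hs hx hz,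
    ← sign_mul, ← sign_mul, hsq]
  exact sign_pos (by positivity)

end SideSign

section SignedArea

variable {𝕜 : Type*} [CommRing 𝕜]

/-- Twice the signed area of the triangle `A B X`, as an affine function of `X`; it serves as an
equation of the line through `A` and `B`. -/
def signedArea (A B : 𝕜 × 𝕜) : 𝕜 × 𝕜 →ᵃ[𝕜] 𝕜 :=
  ((B - A).1 • LinearMap.snd 𝕜 𝕜 𝕜 - (B - A).2 • LinearMap.fst 𝕜 𝕜 𝕜).toAffineMap.comp
    (AffineMap.id 𝕜 (𝕜 × 𝕜) - AffineMap.const 𝕜 (𝕜 × 𝕜) A)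

lemma signedArea_apply (A B X : 𝕜 × 𝕜) :
    signedArea A B X = (B.1 - A.1) * (X.2 - A.2) - (B.2 - A.2) * (X.1 - A.1) := by
  simp [signedArea]

lemma signedArea_self_left (A X : 𝕜 × 𝕜) : signedArea A A X = 0 := by
  simp [signedArea_apply]

lemma signedArea_reverse (A B C : 𝕜 × 𝕜) : signedArea C B A = -signedArea A B C := by
  simp only [signedArea_apply]
  ring

end SignedArea

section PlaneLine

variable {𝕜 : Type*} [Field 𝕜]

lemma exists_smul_eq_iff_mul_eq_mul {u : 𝕜 × 𝕜} (hu : u ≠ 0) (v : 𝕜 × 𝕜) :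
    (∃ r : 𝕜, r • u = v) ↔ u.1 * v.2 = u.2 * v.1 := by
  constructor
  · rintro ⟨r, rfl⟩
    simp only [Prod.smul_fst, Prod.smul_snd, smul_eq_mul]
    ring
  · intro h
    by_cases hu₁ : u.1 = 0
    · have hu₂ : u.2 ≠ 0 := fun hu₂ => hu (Prod.ext hu₁ hu₂)
      have hv₁ : v.1 = 0 := by simpa [hu₁, hu₂] using h
      exact ⟨v.2 / u.2, Prod.ext (by simp [hu₁, hv₁]) (div_mul_cancel₀ _ hu₂)⟩
    · refine ⟨v.1 / u.1, Prod.ext (div_mul_cancel₀ _ hu₁) ?_⟩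
      rw [Prod.smul_snd, smul_eq_mul, div_mul_eq_mul_div, div_eq_iff hu₁]
      linear_combination -h

lemma mem_line_iff_signedArea_eq_zero {A B : 𝕜 × 𝕜} (hAB : A ≠ B) (X : 𝕜 × 𝕜) :
    X ∈ line[𝕜, A, B] ↔ signedArea A B X = 0 := by
  simp only [mem_affineSpan_pair_iff_exists_lineMap_eq, AffineMap.lineMap_apply, vsub_eq_sub,
    vadd_eq_add, ← eq_sub_iff_add_eq]
  rw [exists_smul_eq_iff_mul_eq_mul (sub_ne_zero.2 hAB.symm), signedArea_apply, sub_eq_zero]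
  rfl

variable [LinearOrder 𝕜] [IsStrictOrderedRing 𝕜]

lemma sideSign_line_eq_sign_mul {A B X Y : 𝕜 × 𝕜} (hX : signedArea A B X ≠ 0)
    (hY : signedArea A B Y ≠ 0) :
    sideSign line[𝕜, A, B] X Y = SignType.sign (signedArea A B X * signedArea A B Y) := by
  have hAB : A ≠ B := by
    rintro rfl
    exact hX (signedArea_self_left A X)
  exact sideSign_eq_sign_mul (mem_line_iff_signedArea_eq_zero hAB) hX hY

lemma sideSign_cevians_eq_neg_one {P Q R S : 𝕜 × 𝕜} (hPQ : signedArea P S Q ≠ 0)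
    (hPR : signedArea P S R ≠ 0) (hQR : signedArea Q S R ≠ 0) :
    sideSign line[𝕜, R, S] P Q * sideSign line[𝕜, P, S] Q R * sideSign line[𝕜, Q, S] P R = -1 := by
  have hQP : signedArea Q S P ≠ 0 := by rwa [signedArea_reverse, neg_ne_zero]
  have hRP : signedArea R S P ≠ 0 := by rwa [signedArea_reverse, neg_ne_zero]
  have hRQ : signedArea R S Q ≠ 0 := by rwa [signedArea_reverse, neg_ne_zero]
  have hsq : signedArea R S P * signedArea R S Q * (signedArea P S Q * signedArea P S R) *
      (signedArea Q S P * signedArea Q S R) =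
        -(signedArea P S Q * signedArea P S R * signedArea Q S R) ^ 2 := by
    rw [signedArea_reverse P S R, signedArea_reverse Q S R, signedArea_reverse P S Q]
    ring
  rw [sideSign_line_eq_sign_mul hRP hRQ, sideSign_line_eq_sign_mul hPQ hPR,
    sideSign_line_eq_sign_mul hQP hQR, ← sign_mul, ← sign_mul, hsq]
  exact sign_neg (neg_neg_of_pos (by positivity))

end PlaneLine

lemma GenPos.signedArea_ne_zero {Pts : Finset (ℝ × ℝ)} (hgen : GenPos Pts) {A B C : ℝ × ℝ}
    (hA : A ∈ Pts) (hB : B ∈ Pts) (hC : C ∈ Pts) (hAB : A ≠ B) (hAC : A ≠ C) (hBC : B ≠ C) :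
    signedArea A B C ≠ 0 := by
  rw [ne_eq, ← mem_line_iff_signedArea_eq_zero hAB]
  intro hmem
  refine hgen C hC A hA B hB hAC.symm hBC.symm hAB ?_
  exact collinear_insert_of_mem_affineSpan_pair hmem

section FinsetLemmas

variable {α M : Type*} [DecidableEq α] [CommMonoid M]

lemma prod_powersetCard_succ_insert {s : Finset α} {a : α} (ha : a ∉ s) (k : ℕ)
    (f : Finset α → M) :
    ∏ t ∈ (insert a s).powersetCard (k + 1), f t =
      (∏ t ∈ s.powersetCard (k + 1), f t) * ∏ t ∈ s.powersetCard k, f (insert a t) := by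
  have notMem {k : ℕ} {t : Finset α} (ht : t ∈ s.powersetCard k) : a ∉ t :=
    fun hat => ha ((Finset.mem_powersetCard.1 ht).1 hat)
  rw [Finset.powersetCard_succ_insert ha, Finset.prod_union, Finset.prod_image]
  · intro t ht u hu htu
    rw [← Finset.erase_insert (notMem ht), ← Finset.erase_insert (notMem hu)]
    exact congrArg (Finset.erase · a) htu
  · rw [Finset.disjoint_left]
    rintro t ht htu
    obtain ⟨u, -, rfl⟩ := Finset.mem_image.1 htu
    exact notMem ht (Finset.mem_insert_self a u)

lemma sdiff_pair_eq_insert_sdiff {s : Finset α} {a b c : α} (hc : c ∈ s) (hac : a ≠ c)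
    (hbc : b ≠ c) : s \ {a, b} = insert c (s \ {a, b, c}) := by
  ext x
  simp only [Finset.mem_sdiff, Finset.mem_insert, Finset.mem_singleton]
  grind

end FinsetLemmas

lemma neg_one_pow_sepCount (Pts : Finset (ℝ × ℝ)) (X Y : ℝ × ℝ) :
    (-1 : SignType) ^ sepCount Pts X Y =
      ∏ s ∈ (Pts \ {X, Y}).powersetCard 2, sideSign (affineSpan ℝ (s : Set (ℝ × ℝ))) X Y := by
  -- In `sepCount`, the filtered family is elaborated as a `Finset (Set (ℝ × ℝ))`, obtained from
  -- `powersetCard` by coercing its members through the monad structure of `Finset`.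
  have hcoe : sepCount Pts X Y = (((Pts \ {X, Y}).powersetCard 2).image
      (fun s : Finset (ℝ × ℝ) => (s : Set (ℝ × ℝ))) |>.filter
        fun s => (affineSpan ℝ s).SOppSide X Y).card := by
    unfold sepCount
    congr 2
    ext s
    simp [Finset.bind_def, Finset.pure_def, eq_comm]
  rw [hcoe, ← Finset.prod_const, Finset.prod_filter,
    Finset.prod_image Finset.coe_injective.injOn]
  rfl

lemma neg_one_pow_sepCount_eq_mul {Pts : Finset (ℝ × ℝ)} {X Y Z : ℝ × ℝ} (hZ : Z ∈ Pts)
    (hXZ : X ≠ Z) (hYZ : Y ≠ Z) :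
    (-1 : SignType) ^ sepCount Pts X Y =
      (∏ s ∈ (Pts \ {X, Y, Z}).powersetCard 2, sideSign (affineSpan ℝ (s : Set (ℝ × ℝ))) X Y) *
        ∏ S ∈ Pts \ {X, Y, Z}, sideSign line[ℝ, Z, S] X Y := by
  rw [neg_one_pow_sepCount, sdiff_pair_eq_insert_sdiff hZ hXZ hYZ,
    prod_powersetCard_succ_insert (by simp), Finset.powersetCard_one, Finset.prod_map]
  simp

section Parity

variable {Pts : Finset (ℝ × ℝ)} {P Q R : ℝ × ℝ}

lemma GenPos.prod_sideSign_lines_eq_one (hgen : GenPos Pts) (hP : P ∈ Pts) (hQ : Q ∈ Pts)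
    (hR : R ∈ Pts) :
    ∏ s ∈ (Pts \ {P, Q, R}).powersetCard 2, (sideSign (affineSpan ℝ (s : Set (ℝ × ℝ))) P Q *
      sideSign (affineSpan ℝ s) Q R * sideSign (affineSpan ℝ s) P R) = 1 := by
  refine Finset.prod_eq_one fun s hs => ?_
  obtain ⟨hsub, hcard⟩ := Finset.mem_powersetCard.1 hs
  obtain ⟨U, V, hUV, rfl⟩ := Finset.card_eq_two.1 hcard
  have hU : U ∈ Pts \ {P, Q, R} := hsub (by simp)
  have hV : V ∈ Pts \ {P, Q, R} := hsub (by simp)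
  simp only [Finset.mem_sdiff, Finset.mem_insert, Finset.mem_singleton, not_or] at hU hV
  obtain ⟨hU, hUP, hUQ, hUR⟩ := hU
  obtain ⟨hV, hVP, hVQ, hVR⟩ := hV
  rw [Finset.coe_pair]
  exact sideSign_mul_sideSign_mul_sideSign (mem_line_iff_signedArea_eq_zero hUV)
    (hgen.signedArea_ne_zero hU hV hP hUV hUP hVP)
    (hgen.signedArea_ne_zero hU hV hQ hUV hUQ hVQ)
    (hgen.signedArea_ne_zero hU hV hR hUV hUR hVR)

lemma GenPos.prod_sideSign_cevians_eq_pow_card (hgen : GenPos Pts) (hP : P ∈ Pts) (hQ : Q ∈ Pts)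
    (hR : R ∈ Pts) (hPQ : P ≠ Q) (hPR : P ≠ R) (hQR : Q ≠ R) :
    ∏ S ∈ Pts \ {P, Q, R}, (sideSign line[ℝ, R, S] P Q * sideSign line[ℝ, P, S] Q R *
      sideSign line[ℝ, Q, S] P R) = (-1) ^ (Pts \ {P, Q, R}).card := by
  refine Finset.prod_eq_pow_card fun S hS => ?_
  simp only [Finset.mem_sdiff, Finset.mem_insert, Finset.mem_singleton, not_or] at hS
  obtain ⟨hS, hSP, hSQ, hSR⟩ := hS
  exact sideSign_cevians_eq_neg_one (hgen.signedArea_ne_zero hP hS hQ (Ne.symm hSP) hPQ hSQ)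
    (hgen.signedArea_ne_zero hP hS hR (Ne.symm hSP) hPR hSR)
    (hgen.signedArea_ne_zero hQ hS hR (Ne.symm hSQ) hQR hSR)

lemma GenPos.neg_one_pow_sepCount_triangle (hgen : GenPos Pts) (hP : P ∈ Pts) (hQ : Q ∈ Pts)
    (hR : R ∈ Pts) (hPQ : P ≠ Q) (hPR : P ≠ R) (hQR : Q ≠ R) :
    (-1 : SignType) ^ (sepCount Pts P Q + sepCount Pts Q R + sepCount Pts P R) =
      (-1) ^ (Pts \ {P, Q, R}).card := by
  have hQRP : ({Q, R, P} : Finset (ℝ × ℝ)) = {P, Q, R} := by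
    rw [Finset.pair_comm, Finset.insert_comm]
  have hPRQ : ({P, R, Q} : Finset (ℝ × ℝ)) = {P, Q, R} := by rw [Finset.pair_comm]
  have hlines := hgen.prod_sideSign_lines_eq_one hP hQ hR
  have hcevians := hgen.prod_sideSign_cevians_eq_pow_card hP hQ hR hPQ hPR hQR
  simp only [Finset.prod_mul_distrib] at hlines hcevians
  rw [pow_add, pow_add, neg_one_pow_sepCount_eq_mul hR hPR hQR,
    neg_one_pow_sepCount_eq_mul hP hPQ.symm hPR.symm, neg_one_pow_sepCount_eq_mul hQ hPQ hQR.symm,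
    hQRP, hPRQ, ← one_mul ((-1) ^ _), ← hcevians, ← hlines]
  ac_rfl

lemma GenPos.sepCount_triangle_modEq (hgen : GenPos Pts) (hP : P ∈ Pts) (hQ : Q ∈ Pts)
    (hR : R ∈ Pts) (hPQ : P ≠ Q) (hPR : P ≠ R) (hQR : Q ≠ R) :
    sepCount Pts P Q + sepCount Pts Q R + sepCount Pts P R ≡ Pts.card + 1 [MOD 2] := by
  have hcard : (Pts \ {P, Q, R}).card + 3 = Pts.card := by
    rw [← Finset.card_eq_three.2 ⟨P, Q, R, hPQ, hPR, hQR, rfl⟩]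
    exact Finset.card_sdiff_add_card_eq_card (by simp [Finset.insert_subset_iff, hP, hQ, hR])
  have heven : Even (sepCount Pts P Q + sepCount Pts Q R + sepCount Pts P R +
      (Pts \ {P, Q, R}).card) := by
    rw [← neg_one_pow_eq_one_iff_even (R := SignType) (by decide), pow_add,
      hgen.neg_one_pow_sepCount_triangle hP hQ hR hPQ hPR hQR, ← pow_add]
    exact (Even.add_self _).neg_one_pow
  rw [Nat.even_iff] at heven
  unfold Nat.ModEq
  omega

end Parity

/-- If `n(P,Q) ≢ n(Q,R) (mod 2)` for three pairwise distinct points `P`, `Q`, `R` of a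
configuration of `n` points in general position, then `n(P,R) ≡ n (mod 2)`. -/
theorem sepCount_modeq_of_not_modeq (n : ℕ) (Pts : Finset (ℝ × ℝ))
    (hgen : GenPos Pts) (hcard : Pts.card = n)
    (P Q R : ℝ × ℝ) (hP : P ∈ Pts) (hQ : Q ∈ Pts) (hR : R ∈ Pts)
    (hPQ : P ≠ Q) (hPR : P ≠ R) (hQR : Q ≠ R)
    (h : ¬ (sepCount Pts P Q ≡ sepCount Pts Q R [MOD 2])) :
    sepCount Pts P R ≡ n [MOD 2] := by
  have hsum := hgen.sepCount_triangle_modEq hP hQ hR hPQ hPR hQR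
  rw [hcard] at hsum
  unfold Nat.ModEq at h hsum ⊢
  omega

end
end

section
/- Let 𝒫 be a configuration of n points in general position in the plane. Then the convex hull of 𝒫 has size 3 if and only if there exist three distinct points P, Q, R of 𝒫 with n(P,Q) + n(P,R) + n(Q,R) = n² − 4n + 3; moreover, in that case P, Q, R are exactly the vertices of the convex hull of 𝒫. -/
open scoped Classical

noncomputable section

/-!
Let `T` be a triangle with vertices in a configuration `S` of `n` points in general position. A pair
`s ⊆ S` has at most `2 - |s ∩ T|` sides of `T` crossed by its line: a line crosses at most two
sides, and one through a vertex crosses at most the opposite side. Since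
`∑ₛ |s ∩ T| = 3 (n - 1)`, summing over all pairs bounds the total number of crossings by
`n (n - 1) - 3 (n - 1) = n² - 4 n + 3`. If `S` lies in `T`, then every pair attains its bound, by
Pasch's axiom. Conversely, if the pairs formed by a point `X` and each vertex attain it, the
barycentric coordinates of `X` have equal signs and sum `1`, so `X` lies in `T`. Finally, `S` lies
in `T` exactly when `T` is the convex hull of `S`.
-/

section Side

variable {k V : Type*} [Field k] [LinearOrder k] [IsStrictOrderedRing k]
  [AddCommGroup V] [Module k V] {L : AffineSubspace k V}

lemma sSameSide_or_sOppSide_of_mem_affineSpan_insert {x y : V} (hL : (L : Set V).Nonempty)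
    (hx : x ∉ L) (hy : y ∉ L) (hxy : y ∈ affineSpan k (insert x (L : Set V))) :
    L.SSameSide x y ∨ L.SOppSide x y := by
  obtain ⟨q, hq⟩ := hL
  obtain ⟨r, q', hq', rfl⟩ := (AffineSubspace.mem_affineSpan_insert_iff hq x y).1 hxy
  rcases lt_trichotomy r 0 with hr | rfl | hr
  · exact .inr (AffineSubspace.sOppSide_smul_vsub_vadd_right hx hq hq' hr)
  · exact absurd (by simpa using hq') hy
  · exact .inl (AffineSubspace.sSameSide_smul_vsub_vadd_right hx hq hq' hr)

lemma convex_setOf_sSameSide (L : AffineSubspace k V) (x : V) :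
    Convex k {y | L.SSameSide x y} := by
  intro y hy z hz a b ha hb hab
  obtain ⟨⟨q, hq, -⟩, hx, -⟩ := id hy
  rw [AffineSubspace.setOfPred_sSameSide_eq_image2 hx hq] at hy hz ⊢
  obtain ⟨r, hr, u, hu, rfl⟩ := hy
  obtain ⟨t, ht, v, hv, rfl⟩ := hz
  refine ⟨a • r + b • t, convex_Ioi 0 hr ht ha hb hab, a • u + b • v,
    L.convex hu hv ha hb hab, ?_⟩
  simp only [vsub_eq_sub, vadd_eq_add, smul_eq_mul]
  module

lemma sOppSide_of_mem_convexHull_triple {a b c x : V} (ha : a ∈ L) (hb : b ∉ L) (hc : c ∉ L)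
    (hx : x ∈ L) (hxa : x ≠ a) (hxT : x ∈ convexHull k {a, b, c}) : L.SOppSide b c := by
  rw [convexHull_insert (Set.insert_nonempty _ _), convexHull_pair,
    convexJoin_singleton_left] at hxT
  obtain ⟨y, hy, hxy⟩ := Set.mem_iUnion₂.1 hxT
  have hyL : y ∈ L := affineSpan_pair_le_of_mem_of_mem ha hx
    ((mem_segment_iff_wbtw.1 hxy).right_mem_affineSpan_of_left_ne hxa.symm)
  have hbyc : Sbtw k b y c :=
    ⟨mem_segment_iff_wbtw.1 hy, ne_of_mem_of_not_mem hyL hb, ne_of_mem_of_not_mem hyL hc⟩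
  exact hbyc.sOppSide_of_notMem_of_mem hb hyL

lemma coord_mul_coord_pos_of_sOppSide {ι : Type*} (b : AffineBasis ι k V) {i j l : ι} {x : V}
    (hij : i ≠ j) (hil : i ≠ l) (hjl : j ≠ l) (h : line[k, b i, x].SOppSide (b j) (b l)) :
    0 < b.coord j x * b.coord l x := by
  obtain ⟨y, hy, hjyl⟩ := h.exists_sbtw
  obtain ⟨t, rfl⟩ := mem_affineSpan_pair_iff_exists_lineMap_eq.1 hy
  obtain ⟨r, ⟨hr₀, hr₁⟩, hry⟩ := (sbtw_iff_mem_image_Ioo_and_ne.1 hjyl).1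
  have hj : 1 - r = t * b.coord j x := by
    simpa [AffineMap.lineMap_apply_ring, b.coord_apply_ne hij.symm, b.coord_apply_ne hjl] using
      congrArg (b.coord j) hry
  have hl : r = t * b.coord l x := by
    simpa [AffineMap.lineMap_apply_ring, b.coord_apply_ne hil.symm, b.coord_apply_ne hjl.symm] using
      congrArg (b.coord l) hry
  have hpos : 0 < t ^ 2 * (b.coord j x * b.coord l x) := by
    calc 0 < (1 - r) * r := mul_pos (sub_pos.2 hr₁) hr₀
      _ = (t * b.coord j x) * (t * b.coord l x) := by rw [← hj, ← hl]
      _ = t ^ 2 * (b.coord j x * b.coord l x) := by ring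
  exact pos_of_mul_pos_right hpos (sq_nonneg t)

end Side

section Triangle

open Finset

variable {k V : Type*} [Field k] [LinearOrder k] [IsStrictOrderedRing k]
  [AddCommGroup V] [Module k V] {L : AffineSubspace k V} {p : Fin 3 → V} {x : V}

/-- The sides of the triangle `p` crossed by `L` away from the vertices. Side `i` is the one
opposite to the vertex `p i`; indices are taken modulo `3`. -/
def crossedSides (L : AffineSubspace k V) (p : Fin 3 → V) : Finset (Fin 3) :=
  {i | L.SOppSide (p (i + 1)) (p (i + 2))}

lemma mem_crossedSides {i : Fin 3} :
    i ∈ crossedSides L p ↔ L.SOppSide (p (i + 1)) (p (i + 2)) := by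
  simp [crossedSides]

lemma crossedSides_subset_singleton_of_mem {i : Fin 3} (hi : p i ∈ L) :
    crossedSides L p ⊆ {i} := by
  intro j hj
  obtain ⟨-, h₁, h₂⟩ := mem_crossedSides.1 hj
  rw [mem_singleton]
  fin_cases i <;> fin_cases j <;> first | rfl | contradiction

lemma card_crossedSides_le_two (L : AffineSubspace k V) (p : Fin 3 → V) :
    #(crossedSides L p) ≤ 2 := by
  by_contra! h
  have huniv : crossedSides L p = univ :=
    eq_univ_of_card _ ((card_le_univ _).antisymm h)
  have hall : ∀ i, L.SOppSide (p (i + 1)) (p (i + 2)) := fun i ↦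
    mem_crossedSides.1 (huniv ▸ mem_univ i)
  exact ((hall 2).trans (hall 0)).not_sOppSide (hall 1).symm

lemma card_crossedSides_add_card_mem_le_two {i : Fin 3} (hi : p i ∉ L) :
    #(crossedSides L p) + #{j | p j ∈ L} ≤ 2 := by
  have hne : ∀ j ∈ crossedSides L p, ∀ l, p l ∈ L → j = l := fun j hj l hl ↦
    mem_singleton.1 (crossedSides_subset_singleton_of_mem hl hj)
  rcases (crossedSides L p).eq_empty_or_nonempty with hnone | ⟨j, hj⟩
  · have := card_lt_univ_of_notMem (s := {j | p j ∈ L}) (x := i) (by simpa using hi)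
    rw [Fintype.card_fin] at this
    rw [hnone, card_empty]
    lia
  rcases ({j | p j ∈ L} : Finset (Fin 3)).eq_empty_or_nonempty with hnone | ⟨l, hl⟩
  · simpa [hnone] using card_crossedSides_le_two L p
  · have hl : p l ∈ L := by simpa using hl
    have hcrossed : #(crossedSides L p) ≤ 1 :=
      card_le_card (crossedSides_subset_singleton_of_mem hl)
    have hon : #{l | p l ∈ L} ≤ 1 := card_le_one_iff_subset_singleton.2
      ⟨j, fun l hl ↦ by simpa using (hne j hj l (by simpa using hl)).symm⟩
    lia

-- Pasch's axiom: if `L` crosses at most one side, then all vertices lie on the same side of `L`,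
-- and so does their convex hull.
lemma one_lt_card_crossedSides (hp : ∀ i j, L.SSameSide (p i) (p j) ∨ L.SOppSide (p i) (p j))
    (hx : x ∈ L) (hxT : x ∈ convexHull k (Set.range p)) : 1 < #(crossedSides L p) := by
  by_contra! h
  obtain ⟨i, hi⟩ := card_le_one_iff_subset_singleton.1 h
  have hsame : ∀ j, L.SSameSide (p i) (p j) := by
    intro j
    refine (hp i j).resolve_right fun hopp ↦ ?_
    have huncrossed : ∀ l ≠ i, ¬ L.SOppSide (p (l + 1)) (p (l + 2)) := fun l hl hcross ↦
      hl (mem_singleton.1 (hi (mem_crossedSides.2 hcross)))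
    obtain rfl | rfl | rfl : j = i ∨ j = i + 1 ∨ j = i + 2 := by lia
    · exact AffineSubspace.not_sOppSide_self L _ hopp
    · refine huncrossed (i + 2) (by simp) ?_
      simpa [add_assoc] using hopp
    · refine huncrossed (i + 1) (by simp) ?_
      simpa [add_assoc] using hopp.symm
  exact (convexHull_min (Set.range_subset_iff.2 hsame)
    (convex_setOf_sSameSide L (p i)) hxT).right_notMem hx

lemma mem_crossedSides_of_mem_convexHull {i : Fin 3} (hi : p i ∈ L) (hp : ∀ j ≠ i, p j ∉ L)
    (hx : x ∈ L) (hxi : x ≠ p i) (hxT : x ∈ convexHull k (Set.range p)) :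
    i ∈ crossedSides L p := by
  have hrange : Set.range p = {p i, p (i + 1), p (i + 2)} := by
    ext y
    fin_cases i <;> simp [Fin.exists_fin_succ] <;> tauto
  rw [hrange] at hxT
  exact mem_crossedSides.2 <| sOppSide_of_mem_convexHull_triple hi (hp _ (by simp))
    (hp _ (by simp)) hx hxi hxT

lemma mem_convexHull_of_forall_sOppSide (hp : AffineIndependent k p)
    (hspan : affineSpan k (Set.range p) = ⊤)
    (hx : ∀ i, line[k, p i, x].SOppSide (p (i + 1)) (p (i + 2))) :
    x ∈ convexHull k (Set.range p) := by
  let b : AffineBasis (Fin 3) k V := ⟨p, hp, hspan⟩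
  have hprod : ∀ i, 0 < b.coord (i + 1) x * b.coord (i + 2) x := fun i ↦
    coord_mul_coord_pos_of_sOppSide b (by simp) (by simp) (by simp) (hx i)
  have hsum : b.coord 0 x + b.coord 1 x + b.coord 2 x = 1 :=
    (Fin.sum_univ_three fun i ↦ b.coord i x).symm.trans (b.sum_coord_apply_eq_one x)
  have hnonneg {u v w : k} (h : u + v + w = 1) (huv : 0 < u * v) (huw : 0 < w * u) : 0 ≤ u :=
    calc 0 ≤ u * u + u * v + w * u := by linarith [mul_self_nonneg u]
      _ = u := by rw [show u * u + u * v + w * u = u * (u + v + w) by ring, h, mul_one]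
  have h₀ : 0 < b.coord 1 x * b.coord 2 x := hprod 0
  have h₁ : 0 < b.coord 2 x * b.coord 0 x := hprod 1
  have h₂ : 0 < b.coord 0 x * b.coord 1 x := hprod 2
  change x ∈ convexHull k (Set.range b)
  rw [b.convexHull_eq_nonneg_coord]
  intro i
  match i with
  | 0 => exact hnonneg hsum h₂ h₁
  | 1 => exact hnonneg (by linarith) h₀ h₂
  | 2 => exact hnonneg (by linarith) h₁ h₀

lemma mem_convexHull_of_forall_card_eq_two [DecidableEq V] {S : Finset V}
    (hp : AffineIndependent k p) (hspan : affineSpan k (Set.range p) = ⊤) (hmem : ∀ i, p i ∈ S)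
    (hx : x ∈ S)
    (h : ∀ s ∈ S.powersetCard 2,
      #(crossedSides (affineSpan k (s : Set V)) p) + #{i | p i ∈ s} = 2) :
    x ∈ convexHull k (Set.range p) := by
  by_cases hxp : x ∈ Set.range p
  · exact subset_convexHull k _ hxp
  have hpx : ∀ i, p i ≠ x := fun i hi ↦ hxp ⟨i, hi⟩
  refine mem_convexHull_of_forall_sOppSide hp hspan fun i ↦ ?_
  have hs : {p i, x} ∈ S.powersetCard 2 :=
    mem_powersetCard.2 ⟨by simp [insert_subset_iff, hmem, hx], card_pair (hpx i)⟩
  have hon : ({j | p j ∈ ({p i, x} : Finset V)} : Finset (Fin 3)) = {i} := by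
    ext j
    simp [hpx, hp.injective.eq_iff]
  have hcard := h _ hs
  rw [hon, card_singleton, coe_pair] at hcard
  have hsub := crossedSides_subset_singleton_of_mem (left_mem_affineSpan_pair k (p i) x)
  rw [← mem_crossedSides, eq_of_subset_of_card_le hsub (by rw [card_singleton]; lia)]
  exact mem_singleton_self i

end Triangle

section Hull

lemma convexIndependent_of_affineIndependent {k V ι : Type*} [Field k] [LinearOrder k]
    [IsStrictOrderedRing k] [AddCommGroup V] [Module k V] {p : ι → V}
    (hp : AffineIndependent k p) : ConvexIndependent k p :=
  convexIndependent_iff_notMem_convexHull_sdiff.2 fun i s hi ↦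
    hp.notMem_affineSpan_sdiff i s (convexHull_subset_affineSpan _ hi)

variable {E : Type*} [AddCommGroup E] [Module ℝ E] [TopologicalSpace E] [IsTopologicalAddGroup E]
  [ContinuousSMul ℝ E] [T2Space E] [LocallyConvexSpace ℝ E]

lemma convexHull_extremePoints_convexHull {s : Set E} (hs : s.Finite) :
    convexHull ℝ ((convexHull ℝ s).extremePoints ℝ) = convexHull ℝ s := by
  rw [← ((hs.subset extremePoints_convexHull_subset).isClosed_convexHull (𝕜 := ℝ)).closure_eq,
    closure_convexHull_extremePoints (hs.isCompact_convexHull (𝕜 := ℝ)) (convex_convexHull ℝ s)]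

lemma extremePoints_convexHull_range {ι : Type*} [Finite ι] {p : ι → E}
    (hp : ConvexIndependent ℝ p) :
    (convexHull ℝ (Set.range p)).extremePoints ℝ = Set.range p := by
  refine extremePoints_convexHull_subset.antisymm ?_
  rintro _ ⟨i, rfl⟩
  obtain ⟨t, ht⟩ := Set.subset_range_iff_exists_image_eq.1
    (extremePoints_convexHull_subset (𝕜 := ℝ) (A := Set.range p))
  rw [← ht]
  refine Set.mem_image_of_mem p (hp t i ?_)
  rw [ht, convexHull_extremePoints_convexHull (Set.finite_range p)]
  exact subset_convexHull ℝ _ (Set.mem_range_self i)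

lemma extremePoints_convexHull_eq_range_iff {ι : Type*} {s : Set E} (hs : s.Finite) {p : ι → E}
    (hp : ConvexIndependent ℝ p) (hps : ∀ i, p i ∈ s) :
    (convexHull ℝ s).extremePoints ℝ = Set.range p ↔ s ⊆ convexHull ℝ (Set.range p) := by
  refine ⟨fun h ↦ ?_, fun h ↦ ?_⟩
  · rw [← h, convexHull_extremePoints_convexHull hs]
    exact subset_convexHull ℝ s
  · have hsub : Set.range p ⊆ s := Set.range_subset_iff.2 hps
    have : Finite ι := (Set.finite_range_iff hp.injective).1 (hs.subset hsub)
    rw [(convexHull_min h (convex_convexHull ℝ _)).antisymm (convexHull_mono hsub),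
      extremePoints_convexHull_range hp]

end Hull

lemma range_vec_three {α : Type*} (a b c : α) : Set.range ![a, b, c] = {a, b, c} := by
  simp only [Matrix.range_cons, Matrix.range_empty, Set.singleton_union, insert_empty_eq]

section Counting

open Finset

lemma sum_card_filter_mem_powersetCard {α ι : Type*} [DecidableEq α] [Fintype ι] {S : Finset α}
    {p : ι → α} (hp : ∀ i, p i ∈ S) (k : ℕ) :
    ∑ s ∈ S.powersetCard (k + 1), #{i | p i ∈ s} = Fintype.card ι * (#S - 1).choose k := by
  have hcount (i : ι) : #{s ∈ S.powersetCard (k + 1) | p i ∈ s} = (#S - 1).choose k := by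
    simpa [hp i] using card_filter_powersetCard_subset {p i} S (k + 1)
  calc ∑ s ∈ S.powersetCard (k + 1), #{i | p i ∈ s}
      = ∑ i, #{s ∈ S.powersetCard (k + 1) | p i ∈ s} := by
        simp only [card_filter]
        exact sum_comm
    _ = Fintype.card ι * (#S - 1).choose k := by simp [hcount]

-- The `s` bound in `sepCount` is elaborated as a `Set`, so its filter ranges over coerced pairs.
lemma sepCount_eq_card_filter (Pts : Finset (ℝ × ℝ)) (P Q : ℝ × ℝ) :
    sepCount Pts P Q = #((Pts.powersetCard 2).filter fun s : Finset (ℝ × ℝ) ↦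
      (affineSpan ℝ (s : Set (ℝ × ℝ))).SOppSide P Q) := by
  rw [← card_image_of_injective _ (coe_injective (α := ℝ × ℝ)), sepCount]
  congr 1
  ext t
  simp only [bind_def, pure_def, mem_filter, mem_sup, mem_singleton, mem_image, mem_powersetCard]
  constructor
  · rintro ⟨⟨s, ⟨hs, hcard⟩, rfl⟩, hsep⟩
    exact ⟨s, ⟨⟨hs.trans sdiff_subset, hcard⟩, hsep⟩, rfl⟩
  · rintro ⟨s, ⟨⟨hs, hcard⟩, hsep⟩, rfl⟩
    refine ⟨⟨s, ⟨subset_sdiff.2 ⟨hs, disjoint_right.2 fun x hx hxs ↦ ?_⟩, hcard⟩, rfl⟩, hsep⟩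
    have hxL := subset_affineSpan ℝ (s : Set (ℝ × ℝ)) hxs
    rcases mem_insert.1 hx with rfl | hx
    · exact hsep.left_notMem hxL
    · exact hsep.right_notMem (mem_singleton.1 hx ▸ hxL)

lemma sepCount_comm (Pts : Finset (ℝ × ℝ)) (P Q : ℝ × ℝ) :
    sepCount Pts P Q = sepCount Pts Q P := by
  simp only [sepCount_eq_card_filter, AffineSubspace.sOppSide_comm]

lemma sum_sepCount_eq_sum_card_crossedSides (Pts : Finset (ℝ × ℝ)) (p : Fin 3 → ℝ × ℝ) :
    ∑ i, sepCount Pts (p (i + 1)) (p (i + 2)) =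
      ∑ s ∈ Pts.powersetCard 2, #(crossedSides (affineSpan ℝ (s : Set (ℝ × ℝ))) p) := by
  simp only [sepCount_eq_card_filter, crossedSides, card_filter]
  exact sum_comm

end Counting

namespace GenPos

open Finset

variable {Pts s : Finset (ℝ × ℝ)} {p : Fin 3 → ℝ × ℝ} {x y : ℝ × ℝ}

lemma mem_affineSpan_iff (hPts : GenPos Pts) (hs : s ∈ Pts.powersetCard 2) (hx : x ∈ Pts) :
    x ∈ affineSpan ℝ (s : Set (ℝ × ℝ)) ↔ x ∈ s := by
  refine ⟨fun hxs ↦ ?_, fun hxs ↦ subset_affineSpan ℝ _ hxs⟩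
  obtain ⟨hsub, hcard⟩ := mem_powersetCard.1 hs
  obtain ⟨a, b, hab, rfl⟩ := card_eq_two.1 hcard
  rw [coe_pair] at hxs
  by_contra! hne
  simp only [mem_insert, mem_singleton, not_or] at hne
  exact hPts x hx a (hsub (by simp)) b (hsub (by simp)) hne.1 hne.2 hab
    (collinear_insert_of_mem_affineSpan_pair hxs)

lemma sSameSide_or_sOppSide (hPts : GenPos Pts) (hs : s ∈ Pts.powersetCard 2) (hx : x ∈ Pts)
    (hy : y ∈ Pts) (hxs : x ∉ s) (hys : y ∉ s) :
    (affineSpan ℝ (s : Set (ℝ × ℝ))).SSameSide x y ∨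
      (affineSpan ℝ (s : Set (ℝ × ℝ))).SOppSide x y := by
  obtain ⟨hsub, hcard⟩ := mem_powersetCard.1 hs
  obtain ⟨a, b, hab, rfl⟩ := card_eq_two.1 hcard
  simp only [mem_insert, mem_singleton, not_or] at hxs
  have hL : ({a, b} : Set (ℝ × ℝ)) ⊆ affineSpan ℝ (({a, b} : Finset (ℝ × ℝ)) : Set (ℝ × ℝ)) := by
    simpa using subset_affineSpan ℝ ({a, b} : Set (ℝ × ℝ))
  refine sSameSide_or_sOppSide_of_mem_affineSpan_insert ⟨a, hL (by simp)⟩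
    (mt (hPts.mem_affineSpan_iff hs hx).1 (by simpa using hxs))
    (mt (hPts.mem_affineSpan_iff hs hy).1 hys) (affineSpan_mono ℝ (Set.insert_subset_insert hL) ?_)
  have hxab : AffineIndependent ℝ ![x, a, b] := affineIndependent_iff_not_collinear_set.2 <|
    hPts x hx a (hsub (by simp)) b (hsub (by simp)) hxs.1 hxs.2 hab
  have htop := hxab.affineSpan_eq_top_iff_card_eq_finrank_add_one.2 (by simp)
  rw [range_vec_three] at htop
  exact htop ▸ AffineSubspace.mem_top ℝ _ y

lemma card_crossedSides_affineSpan_add_card_le_two (hPts : GenPos Pts) (hp : p.Injective)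
    (hmem : ∀ i, p i ∈ Pts) (hs : s ∈ Pts.powersetCard 2) :
    #(crossedSides (affineSpan ℝ (s : Set (ℝ × ℝ))) p) + #{i | p i ∈ s} ≤ 2 := by
  obtain ⟨i, hi⟩ : ∃ i, p i ∉ s := by
    by_contra! h
    have := card_le_card_of_injOn p (fun i _ ↦ h i) (hp.injOn (s := (univ : Finset (Fin 3))))
    simp [(mem_powersetCard.1 hs).2] at this
  simpa only [hPts.mem_affineSpan_iff hs (hmem _)] using
    card_crossedSides_add_card_mem_le_two (mt (hPts.mem_affineSpan_iff hs (hmem i)).1 hi)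

lemma two_le_card_crossedSides_affineSpan_add_card (hPts : GenPos Pts) (hp : p.Injective)
    (hmem : ∀ i, p i ∈ Pts) (hs : s ∈ Pts.powersetCard 2)
    (hsT : (s : Set (ℝ × ℝ)) ⊆ convexHull ℝ (Set.range p)) :
    2 ≤ #(crossedSides (affineSpan ℝ (s : Set (ℝ × ℝ))) p) + #{i | p i ∈ s} := by
  have hcard := (mem_powersetCard.1 hs).2
  by_cases hsp : ∀ x ∈ s, ∃ i, p i = x
  · have hle : #s ≤ #{i | p i ∈ s} := by
      refine card_le_card_of_surjOn p fun x hx ↦ ?_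
      obtain ⟨i, rfl⟩ := hsp x hx
      exact ⟨i, by simpa using hx, rfl⟩
    lia
  push Not at hsp
  obtain ⟨x, hx, hxp⟩ := hsp
  have hxL := subset_affineSpan ℝ (s : Set (ℝ × ℝ)) hx
  by_cases hps : ∃ i, p i ∈ s
  · obtain ⟨i, hi⟩ := hps
    have hj : ∀ j ≠ i, p j ∉ s := fun j hji hj ↦ by
      have := card_le_card (show {p i, p j, x} ⊆ s by simp [insert_subset_iff, *])
      rw [card_eq_three.2 ⟨_, _, _, hp.ne hji.symm, hxp i, hxp j, rfl⟩] at this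
      lia
    have hcross : i ∈ crossedSides (affineSpan ℝ (s : Set (ℝ × ℝ))) p :=
      mem_crossedSides_of_mem_convexHull (subset_affineSpan ℝ _ hi)
        (fun j hji ↦ mt (hPts.mem_affineSpan_iff hs (hmem j)).1 (hj j hji)) hxL (hxp i).symm
        (hsT hx)
    have hon : i ∈ ({j | p j ∈ s} : Finset (Fin 3)) := by simpa using hi
    have := card_pos.2 ⟨i, hcross⟩
    have := card_pos.2 ⟨i, hon⟩
    lia
  · push Not at hps
    exact (one_lt_card_crossedSides (fun i j ↦ hPts.sSameSide_or_sOppSide hs (hmem i) (hmem j)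
      (hps i) (hps j)) hxL (hsT hx)).trans_le (Nat.le_add_right _ _)

lemma sum_sepCount_add_eq_iff_subset_convexHull (hPts : GenPos Pts) (hp : AffineIndependent ℝ p)
    (hmem : ∀ i, p i ∈ Pts) :
    ∑ i, sepCount Pts (p (i + 1)) (p (i + 2)) + 3 * (#Pts - 1) = #Pts * (#Pts - 1) ↔
      (Pts : Set (ℝ × ℝ)) ⊆ convexHull ℝ (Set.range p) := by
  have hon : ∑ s ∈ Pts.powersetCard 2, #{i | p i ∈ s} = 3 * (#Pts - 1) := by
    simpa using sum_card_filter_mem_powersetCard hmem 1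
  have htwo : ∑ s ∈ Pts.powersetCard 2, 2 = #Pts * (#Pts - 1) := by
    rw [sum_const, card_powersetCard, smul_eq_mul, Nat.choose_two_right,
      Nat.div_two_mul_two_of_even (Nat.even_mul_pred_self _)]
  rw [sum_sepCount_eq_sum_card_crossedSides, ← hon, ← htwo, ← sum_add_distrib,
    sum_eq_sum_iff_of_le fun s hs ↦
      hPts.card_crossedSides_affineSpan_add_card_le_two hp.injective hmem hs]
  refine ⟨fun h x hx ↦ mem_convexHull_of_forall_card_eq_two hp
      (hp.affineSpan_eq_top_iff_card_eq_finrank_add_one.2 (by simp)) hmem hx h, fun h s hs ↦ ?_⟩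
  exact (hPts.card_crossedSides_affineSpan_add_card_le_two hp.injective hmem hs).antisymm
    (hPts.two_le_card_crossedSides_affineSpan_add_card hp.injective hmem hs
      ((coe_subset.2 (mem_powersetCard.1 hs).1).trans h))

lemma sepCount_sum_eq_iff_hullVertices_eq {P Q R : ℝ × ℝ} (hPts : GenPos Pts) (hP : P ∈ Pts)
    (hQ : Q ∈ Pts) (hR : R ∈ Pts) (hPQ : P ≠ Q) (hPR : P ≠ R) (hQR : Q ≠ R) :
    (sepCount Pts P Q + sepCount Pts P R + sepCount Pts Q R : ℤ) = (#Pts : ℤ) ^ 2 - 4 * #Pts + 3 ↔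
      hullVertices Pts = {P, Q, R} := by
  have hp : AffineIndependent ℝ ![P, Q, R] := affineIndependent_iff_not_collinear_set.2 <|
    hPts P hP Q hQ R hR hPQ hPR hQR
  have hmem : ∀ i, ![P, Q, R] i ∈ Pts := by simp [Fin.forall_fin_succ, *]
  have hcard : 1 ≤ #Pts := card_pos.2 ⟨P, hP⟩
  have hsum : ∑ i, sepCount Pts (![P, Q, R] (i + 1)) (![P, Q, R] (i + 2)) =
      sepCount Pts P Q + sepCount Pts P R + sepCount Pts Q R := by
    rw [Fin.sum_univ_three, sepCount_comm Pts P R]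
    change sepCount Pts Q R + sepCount Pts R P + sepCount Pts P Q = _
    ring
  rw [hullVertices, ← range_vec_three, extremePoints_convexHull_eq_range_iff Pts.finite_toSet
    (convexIndependent_of_affineIndependent hp) hmem,
    ← hPts.sum_sepCount_add_eq_iff_subset_convexHull hp hmem, hsum]
  zify [hcard]
  constructor <;> intro h <;> linarith

end GenPos

/-- The convex hull of a configuration of `n` points in general position has size `3` if and
only if there exist three distinct points `P`, `Q`, `R` of the configuration with
`n(P,Q) + n(P,R) + n(Q,R) = n² - 4n + 3`; moreover, in that case `P`, `Q`, `R` are exactly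
the vertices of the convex hull. -/
theorem hull_three_iff_sepCount_sum (n : ℕ) (Pts : Finset (ℝ × ℝ))
    (hgen : GenPos Pts) (hcard : Pts.card = n) :
    ((hullVertices Pts).ncard = 3 ↔
      ∃ P ∈ Pts, ∃ Q ∈ Pts, ∃ R ∈ Pts, P ≠ Q ∧ P ≠ R ∧ Q ≠ R ∧
        (sepCount Pts P Q + sepCount Pts P R + sepCount Pts Q R : ℤ)
          = (n : ℤ)^2 - 4 * n + 3) ∧
    ∀ P ∈ Pts, ∀ Q ∈ Pts, ∀ R ∈ Pts, P ≠ Q → P ≠ R → Q ≠ R →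
      (sepCount Pts P Q + sepCount Pts P R + sepCount Pts Q R : ℤ)
        = (n : ℤ)^2 - 4 * n + 3 →
      hullVertices Pts = {P, Q, R} := by
  subst hcard
  refine ⟨⟨fun h ↦ ?_, ?_⟩, fun P hP Q hQ R hR hPQ hPR hQR ↦
    (hgen.sepCount_sum_eq_iff_hullVertices_eq hP hQ hR hPQ hPR hQR).1⟩
  · obtain ⟨P, Q, R, hPQ, hPR, hQR, hvert⟩ := Set.ncard_eq_three.1 h
    have hsub : ({P, Q, R} : Set (ℝ × ℝ)) ⊆ Pts := hvert ▸ extremePoints_convexHull_subset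
    have hP : P ∈ Pts := hsub (by simp)
    have hQ : Q ∈ Pts := hsub (by simp)
    have hR : R ∈ Pts := hsub (by simp)
    exact ⟨P, hP, Q, hQ, R, hR, hPQ, hPR, hQR,
      (hgen.sepCount_sum_eq_iff_hullVertices_eq hP hQ hR hPQ hPR hQR).2 hvert⟩
  · rintro ⟨P, hP, Q, hQ, R, hR, hPQ, hPR, hQR, hsum⟩
    exact Set.ncard_eq_three.2 ⟨P, Q, R, hPQ, hPR, hQR,
      (hgen.sepCount_sum_eq_iff_hullVertices_eq hP hQ hR hPQ hPR hQR).1 hsum⟩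

end
end
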